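/- arXiv:1910.09050 — 4 statements merged into one kernel-verified Lean document; each statement's English description precedes it below -/
import Mathlib

section
/- Let α be a finite word over a finite alphabet and let q < r be two periods of α with 0 < q < r < lh(α) and r − q < lh(α) − r. Then the initial segment α[0, lh(α)−r−1] of α of length lh(α) − r has period r − q. -/
/-- `η` has period `p`: `η(i) = η(i+p)` for all `0 ≤ i < lh(η) − p`. -/
def HasPeriod {α : Type*} (η : List α) (p : ℕ) : Prop :=
  ∀ i : ℕ, i + p < η.length → η[i]? = η[i + p]?

/-- Let `α` be a finite word over a finite alphabet and let `q < r` be two periods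
of `α` with `0 < q < r < lh(α)` and `r − q < lh(α) − r`.  Then the initial segment
`α[0, lh(α)−r−1]` of `α` of length `lh(α) − r` has period `r − q`. -/
theorem prefix_period_of_two_periods {A : Type*} [Fintype A]
    (α : List A) (q r : ℕ)
    (hq0 : 0 < q) (hqr : q < r) (hr : r < α.length)
    (hgap : r - q < α.length - r)
    (hperq : HasPeriod α q) (hperr : HasPeriod α r) :
    HasPeriod (α.take (α.length - r)) (r - q) := by
  intro i hi
  rw [List.length_take] at hi
  rw [List.getElem?_take_of_lt (by omega), List.getElem?_take_of_lt (by omega)]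
  -- Both letters equal `α(i + r)`: shift `i` by the period `r`, and `i + (r - q)` by the period `q`.
  have h₁ := hperr i (by omega)
  have h₂ := hperq (i + (r - q)) (by omega)
  rw [show i + (r - q) + q = i + r by omega] at h₂
  exact h₁.trans h₂.symm
end

section
/- Let (X_V, T) be a rank-one subshift with unbounded spacer parameter and let L ≥ lh(v_1). Let x, x' ∈ X_V be elements containing no one-sided infinite run of 1s (so that each admits, for every n ≥ 1, a unique decomposition into expected occurrences of v_n separated by spacers). Suppose that for every l ≥ L, every spacer of length l between expected occurrences of v_1 in x occurs at the same position as a spacer of length l between expected occurrences of v_1 in x'. Then x = x'. -/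
/-!
A block of `1`s of length at least `L ≥ |v 1|` cannot meet an occurrence of `v 1`, which begins and
ends with `0`. So the alignment hypothesis says exactly that every maximal block of `1`s of length
at least `L` in `x` is a maximal block of `1`s in `x'` (`ExpectedDecomp.spacerAt`,
`ExpectedDecomp.maxRun`), and the given decompositions into copies of `v 1` play no further role.

By unboundedness some `w = v n` contains a maximal block of `1`s of some length `M ≥ L`. Both `x` and
`x'` are tiled by copies of `w` separated by `1`s (`exists_tiled`, by compactness). If the two tilings
share a copy of `w`, they share the next one to the right (`next_eq`): a gap of length at least `L`
in `x` is copied to `x'`, and after a shorter gap a misplaced copy of `w` in `x'` would be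
incompatible with the first block of length `M` of the copy in `x`. Hence `x` and `x'` agree to the
right of any shared copy (`eq_right`).

Shared copies exist arbitrarily far to the left. Indeed, some `v k` contains a maximal block of `1`s
longer than `w`, and `v k` occurs in `x` around every zero. Such a block is also a maximal block of
`x'`, and in either tiling a copy of `w` must end right before it (`Tiled.mem_of_long`).
-/

/-- The shift map on bi-infinite sequences: `(shiftZ x) k = x (k+1)`. -/
def shiftZ {α : Type*} (x : ℤ → α) : ℤ → α := fun k => x (k + 1)

/-- `(q, a, v)` is a rank-one construction sequence: `q` is the cutting parameter
(each `q n > 1`), `a` is the spacer parameter (the relevant values are `a n i` for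
`1 ≤ i < q n`), `v 0 = 0`, and
`v (n+1) = v n 1^{a n 1} v n 1^{a n 2} ⋯ v n 1^{a n (q n − 1)} v n`. -/
def IsRankOneSeq (q : ℕ → ℕ) (a : ℕ → ℕ → ℕ) (v : ℕ → List (Fin 2)) : Prop :=
  (∀ n, 1 < q n) ∧ v 0 = [0] ∧
    ∀ n, v (n + 1) = v n ++
      (List.ofFn fun i : Fin (q n - 1) =>
        List.replicate (a n (i.1 + 1)) 1 ++ v n).flatten

/-- `V` is the infinite rank-one word: every `v n` is an initial segment of `V`. -/
def IsLimitWord (v : ℕ → List (Fin 2)) (V : ℕ → Fin 2) : Prop :=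
  ∀ (n k : ℕ) (h : k < (v n).length), V k = (v n).get ⟨k, h⟩

/-- The rank-one subshift determined by the infinite rank-one word `V`: the set of
all bi-infinite binary words all of whose finite subwords occur in `V`. -/
def XV (V : ℕ → Fin 2) : Set (ℤ → Fin 2) :=
  {x | ∀ (i : ℤ) (m : ℕ), ∃ t : ℕ, ∀ k : ℕ, k < m → x (i + (k : ℤ)) = V (t + k)}

/-- The spacer parameter is bounded. -/
def BoundedSpacer (q : ℕ → ℕ) (a : ℕ → ℕ → ℕ) : Prop :=
  ∃ B, ∀ n i, 1 ≤ i → i < q n → a n i ≤ B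

/-- The spacer parameter is unbounded. -/
def UnboundedSpacer (q : ℕ → ℕ) (a : ℕ → ℕ → ℕ) : Prop :=
  ∀ B, ∃ n i, 1 ≤ i ∧ i < q n ∧ B < a n i

/-- `p` enumerates (in increasing order) the starting positions of the expected
occurrences of the word `w` in the bi-infinite word `x`: the occurrences of `w` at
the positions `p i` are pairwise non-overlapping, between two consecutive such
occurrences `x` consists only of `1`s (these maximal runs of `1`s are the
spacers), and the positions `p i` are unbounded in both directions. -/
def ExpectedDecomp (w : List (Fin 2)) (x : ℤ → Fin 2) (p : ℤ → ℤ) : Prop :=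
  StrictMono p ∧
  (∀ i : ℤ, p i + w.length ≤ p (i + 1)) ∧
  (∀ (i : ℤ) (k : ℕ) (hk : k < w.length), x (p i + (k : ℤ)) = w.get ⟨k, hk⟩) ∧
  (∀ i m : ℤ, p i + w.length ≤ m → m < p (i + 1) → x m = 1) ∧
  (∀ K : ℤ, ∃ i, K ≤ p i) ∧ (∀ K : ℤ, ∃ i, p i ≤ K)

/-- In the decomposition of `x` given by `p` (into expected occurrences of `w`),
there is a spacer of length `l` occurring at position `s` (the coordinate of its
first symbol). -/
def SpacerAt (w : List (Fin 2)) (p : ℤ → ℤ) (l : ℕ) (s : ℤ) : Prop :=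
  ∃ i : ℤ, s = p i + w.length ∧ p (i + 1) = s + (l : ℤ)

/-- `x` has a maximal block of `1`s of length exactly `l` starting at `s`. -/
def MaxRun (x : ℤ → Fin 2) (s l : ℤ) : Prop :=
  x (s - 1) = 0 ∧ (∀ m, s ≤ m → m < s + l → x m = 1) ∧ x (s + l) = 0

/-- `E` is a set of pairwise disjoint occurrences in `x` of the word `w 0 ⋯ w (h - 1)`, outside
which `x` consists of `1`s. -/
structure Tiled (h : ℤ) (w x : ℤ → Fin 2) (E : Set ℤ) : Prop where
  occ : ∀ e ∈ E, ∀ m, e ≤ m → m < e + h → x m = w (m - e)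
  cover : ∀ z, x z = 0 → ∃ e ∈ E, e ≤ z ∧ z < e + h
  sep : ∀ e ∈ E, ∀ e' ∈ E, e < e' → e + h ≤ e'

/-- A list read as a function on `ℤ`; only the values at `0 ≤ k < u.length` matter. -/
def wordFn (u : List (Fin 2)) (k : ℤ) : Fin 2 := u.getD k.toNat 0

/-! ### Tilings of bi-infinite words -/

lemma fin2_absurd {a : Fin 2} (h0 : a = 0) (h1 : a = 1) : False := by
  rw [h0] at h1; exact absurd h1 (by decide)

lemma fin2_ne_zero {a : Fin 2} (h : a ≠ 0) : a = 1 := by omega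

lemma Tiled.exists_next {h : ℤ} {w x : ℤ → Fin 2} {E : Set ℤ} (T : Tiled h w x E)
    (w0 : w 0 = 0) (hz : ∀ K : ℤ, ∃ k, K ≤ k ∧ x k = 0) {P : ℤ} (hP : P ∈ E) :
    ∃ Q ∈ E, P + h ≤ Q ∧ ∀ m, P + h ≤ m → m < Q → x m = 1 := by
  classical
  obtain ⟨z, ⟨hz1, hz2⟩, hmin⟩ := Int.exists_least_of_bdd
    (P := fun k => P + h ≤ k ∧ x k = 0) ⟨P + h, fun z hz => hz.1⟩ (hz (P + h))
  obtain ⟨e, he, he1, he2⟩ := T.cover z hz2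
  have hxe : x e = 0 := by rw [T.occ e he e le_rfl (by omega), sub_self, w0]
  have hPe : P < e := by
    rcases lt_trichotomy e P with h1 | h1 | h1
    · have := T.sep e he P hP h1
      omega
    · omega
    · exact h1
  have hPe' := T.sep P hP e he hPe
  have := hmin e ⟨hPe', hxe⟩
  obtain rfl : e = z := by omega
  refine ⟨e, he, hz1, fun m h1 h2 => fin2_ne_zero fun h3 => ?_⟩
  have := hmin m ⟨h1, h3⟩
  omega

/-- A maximal block of `1`s at least as long as `w` cannot meet an occurrence of `w`, so it
immediately follows one. -/
lemma Tiled.mem_of_long {h : ℤ} {w x : ℤ → Fin 2} {E : Set ℤ} (T : Tiled h w x E)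
    (w1 : w (h - 1) = 0) {s l : ℤ} (hl : h ≤ l) (hr : MaxRun x s l) : s - h ∈ E := by
  obtain ⟨e, he, he1, he2⟩ := T.cover _ hr.1
  have hx : x (e + h - 1) = 0 := by
    rw [T.occ e he (e + h - 1) (by omega) (by omega), ← w1]; congr 1; ring
  by_cases hs : s ≤ e + h - 1
  · exact (fin2_absurd hx (hr.2.1 _ hs (by omega))).elim
  · obtain rfl : e = s - h := by omega
    exact he

lemma MaxRun.length_unique {x : ℤ → Fin 2} {s l l' : ℤ} (hl : 0 ≤ l) (hl' : 0 ≤ l')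
    (h1 : MaxRun x s l) (h2 : MaxRun x s l') : l = l' := by
  rcases lt_trichotomy l l' with h | h | h
  · exact (fin2_absurd h1.2.2 (h2.2.1 _ (by omega) (by omega))).elim
  · exact h
  · exact (fin2_absurd h2.2.2 (h1.2.1 _ (by omega) (by omega))).elim

/-- A maximal block of `1`s inside `w` is seen in every occurrence of `w`. -/
lemma Tiled.maxRun {h : ℤ} {w x : ℤ → Fin 2} {E : Set ℤ} (T : Tiled h w x E)
    {e α l : ℤ} (he : e ∈ E) (h1 : 1 ≤ α) (h0 : 0 ≤ l) (h2 : α + l < h) (hr : MaxRun w α l) :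
    MaxRun x (e + α) l := by
  refine ⟨?_, fun m hm1 hm2 => ?_, ?_⟩
  · rw [T.occ e he _ (by omega) (by omega), ← hr.1]; congr 1; ring
  · rw [T.occ e he _ (by omega) (by omega)]
    exact hr.2.1 _ (by omega) (by omega)
  · rw [T.occ e he _ (by omega) (by omega), ← hr.2.2]; congr 1; ring

/-- If `w` occurs at `P` in both tilings, then its next occurrences `Q`, `Q'` coincide. A gap of
length at least `L` in `x` is copied to `x'`. After a shorter gap, the first maximal block of
length `M` in the copy of `w` at `Q` must reappear in `x'`: it comes too early if `Q < Q'`, as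
`α` is the first place of such a block in `w`, and if `Q' < Q` it is displaced by less than `M`
from the block of the copy at `Q'`, so the two overlap. -/
lemma next_eq {h L M α : ℤ} {w x x' : ℤ → Fin 2} {E E' : Set ℤ}
    (T : Tiled h w x E) (T' : Tiled h w x' E') (hh : 0 < h) (w0 : w 0 = 0) (w1 : w (h - 1) = 0)
    (hL0 : 0 ≤ L) (hLM : L ≤ M) (hα1 : 1 ≤ α) (hα2 : α + M < h) (hα : MaxRun w α M)
    (hmin : ∀ β, 1 ≤ β → MaxRun w β M → α ≤ β)
    (hal : ∀ s l, L ≤ l → MaxRun x s l → MaxRun x' s l)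
    {P Q Q' : ℤ} (hP : P ∈ E) (hP' : P ∈ E') (hQ : Q ∈ E) (hQ' : Q' ∈ E')
    (hPQ : P + h ≤ Q) (hPQ' : P + h ≤ Q') (h1 : ∀ m, P + h ≤ m → m < Q → x m = 1)
    (h1' : ∀ m, P + h ≤ m → m < Q' → x' m = 1) : Q = Q' := by
  have zs : x Q = 0 := by rw [T.occ Q hQ Q le_rfl (by omega), sub_self, w0]
  have zs' : x' Q' = 0 := by rw [T'.occ Q' hQ' Q' le_rfl (by omega), sub_self, w0]
  have ze : x (P + h - 1) = 0 := by
    rw [T.occ P hP _ (by omega) (by omega), ← w1]; congr 1; ring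
  have ze' : x' (P + h - 1) = 0 := by
    rw [T'.occ P hP' _ (by omega) (by omega), ← w1]; congr 1; ring
  have r : MaxRun x (P + h) (Q - (P + h)) :=
    ⟨ze, fun m a b => h1 m a (by omega), by rw [add_sub_cancel]; exact zs⟩
  have r' : MaxRun x' (P + h) (Q' - (P + h)) :=
    ⟨ze', fun m a b => h1' m a (by omega), by rw [add_sub_cancel]; exact zs'⟩
  by_cases hc : L ≤ Q - (P + h)
  · have := MaxRun.length_unique (by omega) (by omega) (hal _ _ hc r) r'
    omega
  · have R := hal _ _ hLM (T.maxRun hQ hα1 (by omega) hα2 hα)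
    rcases lt_trichotomy Q Q' with hlt | heq | hgt
    · have hQα : Q' ≤ Q + α - 1 := by
        by_contra hcon
        exact fin2_absurd R.1 (h1' _ (by omega) (by omega))
      have : MaxRun w (Q + α - Q') M := by
        refine ⟨?_, fun m hm1 hm2 => ?_, ?_⟩
        · rw [← R.1, T'.occ Q' hQ' _ (by omega) (by omega)]; congr 1; ring
        · rw [← R.2.1 (m + Q') (by omega) (by omega), T'.occ Q' hQ' _ (by omega) (by omega)]
          congr 1; ring
        · rw [← R.2.2, T'.occ Q' hQ' _ (by omega) (by omega)]; congr 1; ring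
      have := hmin _ (by omega) this
      omega
    · exact heq
    · have R' := T'.maxRun hQ' hα1 (by omega) hα2 hα
      exact (fin2_absurd R.1 (R'.2.1 _ (by omega) (by omega))).elim

/-- Two tiled words sharing an occurrence of `w` at `P` agree from `P` on. -/
lemma eq_right {h L M α : ℤ} {w x x' : ℤ → Fin 2} {E E' : Set ℤ}
    (T : Tiled h w x E) (T' : Tiled h w x' E') (hh : 0 < h) (w0 : w 0 = 0) (w1 : w (h - 1) = 0)
    (hL0 : 0 ≤ L) (hLM : L ≤ M) (hα1 : 1 ≤ α) (hα2 : α + M < h) (hα : MaxRun w α M)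
    (hmin : ∀ β, 1 ≤ β → MaxRun w β M → α ≤ β)
    (hal : ∀ s l, L ≤ l → MaxRun x s l → MaxRun x' s l)
    (hz : ∀ K : ℤ, ∃ k, K ≤ k ∧ x k = 0) (hz' : ∀ K : ℤ, ∃ k, K ≤ k ∧ x' k = 0)
    (m : ℤ) : ∀ (N : ℕ) (P : ℤ), P ∈ E → P ∈ E' → P ≤ m → m < P + N → x m = x' m := by
  intro N
  induction N with
  | zero => intro P _ _ h1 h2; simp at h2; omega
  | succ N ih =>
    intro P hP hP' hPm hm
    by_cases hmh : m < P + h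
    · rw [T.occ P hP m hPm hmh, T'.occ P hP' m hPm hmh]
    · obtain ⟨Q, hQ, hPQ, h1⟩ := T.exists_next w0 hz hP
      obtain ⟨Q', hQ', hPQ', h1'⟩ := T'.exists_next w0 hz' hP'
      obtain rfl := next_eq T T' hh w0 w1 hL0 hLM hα1 hα2 hα hmin hal hP hP' hQ hQ' hPQ hPQ' h1 h1'
      by_cases hmQ : m < Q
      · rw [h1 m (by omega) hmQ, h1' m (by omega) hmQ]
      · exact ih Q hQ hQ' (by omega) (by push_cast at hm; omega)

/-! ### The words `v n` -/

/-- `u 1^{a₁} u 1^{a₂} ⋯ 1^{aᵣ} u` for `g = [a₁, …, aᵣ]`. -/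
def spaced (u : List (Fin 2)) (g : List ℕ) : List (Fin 2) :=
  u ++ (g.map fun a => List.replicate a 1 ++ u).flatten

lemma IsRankOneSeq.exists_spaced {q : ℕ → ℕ} {a : ℕ → ℕ → ℕ} {v : ℕ → List (Fin 2)}
    (hv : IsRankOneSeq q a v) (n : ℕ) :
    ∃ g : List ℕ, g ≠ [] ∧ (∀ i, 1 ≤ i → i < q n → a n i ∈ g) ∧ v (n + 1) = spaced (v n) g := by
  have hq := hv.1 n
  refine ⟨List.ofFn fun i : Fin (q n - 1) => a n (i.1 + 1), ?_, ?_, ?_⟩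
  · intro h
    have := congrArg List.length h
    simp at this
    omega
  · intro i h1 h2
    rw [List.mem_ofFn]
    exact ⟨⟨i - 1, by omega⟩, by simp only []; congr 1; omega⟩
  · rw [hv.2.2 n, spaced, List.map_ofFn]
    rfl

/-- `w` tiles the finite word `u` with spacers made of `1`s, starting and ending with `w`. -/
inductive TilesWord (w : List (Fin 2)) : List (Fin 2) → Prop
  | base : TilesWord w w
  | cons (a : ℕ) (u : List (Fin 2)) : TilesWord w u → TilesWord w (w ++ List.replicate a 1 ++ u)

lemma TilesWord.append {w u u' : List (Fin 2)} (hu : TilesWord w u) (hu' : TilesWord w u') (a : ℕ) :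
    TilesWord w (u ++ List.replicate a 1 ++ u') := by
  induction hu with
  | base => exact .cons a _ hu'
  | cons b u _ ih =>
    have := TilesWord.cons b _ ih
    simpa [List.append_assoc] using this

lemma TilesWord.spaced {w u : List (Fin 2)} (hu : TilesWord w u) (g : List ℕ) :
    TilesWord w (spaced u g) := by
  induction g with
  | nil => simpa [_root_.spaced] using hu
  | cons a g ih =>
    have := hu.append ih a
    simpa [_root_.spaced, List.append_assoc] using this

lemma tilesWord_v {q : ℕ → ℕ} {a : ℕ → ℕ → ℕ} {v : ℕ → List (Fin 2)}
    (hv : IsRankOneSeq q a v) (n k : ℕ) : TilesWord (v n) (v (n + k)) := by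
  induction k with
  | zero => exact .base
  | succ k ih =>
    obtain ⟨g, -, -, hg⟩ := hv.exists_spaced (n + k)
    rw [← add_assoc, hg]
    exact ih.spaced g

lemma v_prefix {q : ℕ → ℕ} {a : ℕ → ℕ → ℕ} {v : ℕ → List (Fin 2)}
    (hv : IsRankOneSeq q a v) (n : ℕ) : n + 1 ≤ (v n).length ∧ (∃ A, v n = 0 :: A) ∧
      ∃ A, v n = A ++ [0] := by
  induction n with
  | zero => rw [hv.2.1]; exact ⟨by simp, ⟨[], rfl⟩, ⟨[], rfl⟩⟩
  | succ n ih =>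
    obtain ⟨g, hg0, -, hg⟩ := hv.exists_spaced n
    obtain ⟨h1, ⟨A, hA⟩, ⟨B, hB⟩⟩ := ih
    rw [hg]
    obtain ⟨g', b, rfl⟩ : ∃ g' b, g = g' ++ [b] :=
      ⟨_, _, (List.dropLast_append_getLast hg0).symm⟩
    refine ⟨?_, ⟨A ++ ((g' ++ [b]).map fun a => List.replicate a 1 ++ v n).flatten, ?_⟩,
      ⟨spaced (v n) g' ++ List.replicate b 1 ++ B, ?_⟩⟩
    · simp [spaced]; omega
    · rw [spaced]; nth_rewrite 1 [hA]; rw [List.cons_append]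
    · have : spaced (v n) (g' ++ [b]) = spaced (v n) g' ++ List.replicate b 1 ++ v n := by
        simp [spaced]
      rw [this]
      nth_rewrite 2 [hB]
      simp [List.append_assoc]

lemma exists_zero_end_spaced {u : List (Fin 2)} (hu : ∃ A, u = A ++ [0]) (g : List ℕ) :
    ∃ A, spaced u g = A ++ [0] := by
  obtain ⟨A, hA⟩ := hu
  induction g with
  | nil => exact ⟨A, by simpa [spaced] using hA⟩
  | cons a g ih =>
    obtain ⟨B, hB⟩ := ih
    refine ⟨u ++ List.replicate a 1 ++ B, ?_⟩
    have : spaced u (a :: g) = u ++ List.replicate a 1 ++ spaced u g := by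
      simp [spaced]
    rw [this, hB]
    simp

lemma exists_long_run {q : ℕ → ℕ} {a : ℕ → ℕ → ℕ} {v : ℕ → List (Fin 2)}
    (hv : IsRankOneSeq q a v) (hub : UnboundedSpacer q a) (B : ℕ) :
    ∃ (n : ℕ) (α l : ℕ), B < l ∧ 1 ≤ α ∧ α + l < (v n).length ∧ MaxRun (wordFn (v n)) α l := by
  obtain ⟨n, i, h1, h2, h3⟩ := hub B
  obtain ⟨g, -, hg, hvg⟩ := hv.exists_spaced n
  obtain ⟨g1, g2, rfl⟩ := List.append_of_mem (hg i h1 h2)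
  obtain ⟨-, ⟨C, hC⟩, hend⟩ := v_prefix hv n
  obtain ⟨A, hA⟩ := exists_zero_end_spaced hend g1
  generalize a n i = l at *
  obtain ⟨D, hD⟩ : ∃ D, v (n + 1) = A ++ 0 :: (List.replicate l 1 ++ 0 :: D) := by
    have : v (n + 1) = spaced (v n) g1 ++ List.replicate l 1 ++
        (v n ++ (g2.map fun a => List.replicate a 1 ++ v n).flatten) := by
      rw [hvg]; simp [spaced]
    rw [this, hA]
    nth_rewrite 1 [hC]
    simp
  refine ⟨n + 1, A.length + 1, l, h3, by omega, ?_, ?_⟩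
  · rw [hD]; simp; omega
  · rw [hD]
    refine ⟨?_, fun m hm1 hm2 => ?_, ?_⟩
    · simp [wordFn]
    · obtain ⟨k, rfl⟩ : ∃ k : ℕ, m = (A.length + 1 + k : ℕ) := ⟨(m - (A.length + 1)).toNat, by
        push_cast at hm1 ⊢; omega⟩
      have hk : k < l := by push_cast at hm2; omega
      rw [wordFn, Int.toNat_natCast, List.getD_append_right _ _ _ _ (by omega),
        show A.length + 1 + k - A.length = k + 1 by omega, List.getD_cons_succ,
        List.getD_append _ _ _ _ (by simpa using hk)]
      simp [List.getD_eq_getElem?_getD, hk]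
    · have : ((A.length + 1 : ℕ) : ℤ) + l = (A.length + 1 + l : ℕ) := by push_cast; ring
      rw [this, wordFn, Int.toNat_natCast, List.getD_append_right _ _ _ _ (by omega),
        show A.length + 1 + l - A.length = l + 1 by omega, List.getD_cons_succ,
        List.getD_append_right _ _ _ _ (by simp)]
      simp

/-! ### Tilings of elements of the subshift -/

/-- The starting positions of the copies of `w` in a tiled finite word. -/
lemma TilesWord.exists_positions {w u : List (Fin 2)} (hu : TilesWord w u) :
    ∃ E : Set ℕ, (∀ e ∈ E, e + w.length ≤ u.length ∧ ∀ k < w.length, u.getD (e + k) 0 = w.getD k 0) ∧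
      (∀ z < u.length, u.getD z 0 = 0 → ∃ e ∈ E, e ≤ z ∧ z < e + w.length) ∧
      (∀ e ∈ E, ∀ e' ∈ E, e < e' → e + w.length ≤ e') := by
  induction hu with
  | base =>
    refine ⟨{0}, ?_, ?_, ?_⟩
    · rintro e rfl; simp
    · intro z hz _; exact ⟨0, rfl, by omega, by omega⟩
    · rintro e rfl e' rfl h; omega
  | cons a u _ ih =>
    obtain ⟨E, h1, h2, h3⟩ := ih
    have hget : ∀ k, (w ++ List.replicate a 1 ++ u).getD (w.length + a + k) 0 = u.getD k 0 := by
      intro k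
      rw [List.getD_append_right _ _ _ _ (by simp)]
      congr 1; simp
    refine ⟨insert 0 ((fun e => w.length + a + e) '' E), ?_, ?_, ?_⟩
    · rintro e (rfl | ⟨e, he, rfl⟩)
      · refine ⟨by simp, fun k hk => ?_⟩
        rw [zero_add, List.append_assoc, List.getD_append _ _ _ _ hk]
      · refine ⟨by have := (h1 e he).1; simp; omega, fun k hk => ?_⟩
        simp only []
        rw [add_assoc (w.length + a), hget, (h1 e he).2 k hk]
    · intro z hz hz0
      by_cases hzw : z < w.length
      · exact ⟨0, by simp, by omega, by omega⟩
      · by_cases hza : z < w.length + a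
        · rw [List.append_assoc, List.getD_append_right _ _ _ _ (by omega),
            List.getD_append _ _ _ _ (by simp; omega)] at hz0
          have : (List.replicate a (1 : Fin 2)).getD (z - w.length) 0 = 1 := by
            simp [List.getD_eq_getElem?_getD, show z - w.length < a by omega]
          exact (fin2_absurd hz0 this).elim
        · obtain ⟨k, rfl⟩ : ∃ k, z = w.length + a + k := ⟨z - (w.length + a), by omega⟩
          rw [hget] at hz0
          simp at hz
          obtain ⟨e, he, he1, he2⟩ := h2 k (by omega) hz0
          exact ⟨w.length + a + e, Or.inr ⟨e, he, rfl⟩, by omega, by omega⟩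
    · rintro e (rfl | ⟨e, he, rfl⟩) e' (rfl | ⟨e', he', rfl⟩) hlt
      · omega
      · simp only []; omega
      · simp only [] at hlt; omega
      · simp only [] at hlt ⊢
        have := h3 e he e' he' (by omega)
        omega

/-- Every window of `x` lies in some `v K` with `K ≥ n`, hence inherits a tiling by `v n`; an
ultrafilter limit of these finite tilings tiles `x`. -/
lemma exists_tiled {q : ℕ → ℕ} {a : ℕ → ℕ → ℕ} {v : ℕ → List (Fin 2)}
    (hv : IsRankOneSeq q a v) {V : ℕ → Fin 2} (hV : IsLimitWord v V) {x : ℤ → Fin 2}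
    (hx : x ∈ XV V) (n : ℕ) : ∃ E, Tiled (v n).length (wordFn (v n)) x E := by
  set h := (v n).length with hh
  have key : ∀ N : ℕ, ∃ F : Set ℤ,
      (∀ e ∈ F, ∀ m, e ≤ m → m < e + h → -(N : ℤ) ≤ m → m < N → x m = wordFn (v n) (m - e)) ∧
      (∀ z, -(N : ℤ) ≤ z → z < N → x z = 0 → ∃ e ∈ F, e ≤ z ∧ z < e + h) ∧
      (∀ e ∈ F, ∀ e' ∈ F, e < e' → e + h ≤ e') := by
    intro N
    obtain ⟨t, ht⟩ := hx (-(N : ℤ)) (2 * N)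
    have hlen : t + 2 * N < (v (n + (t + 2 * N))).length := by
      have := (v_prefix hv (n + (t + 2 * N))).1
      omega
    obtain ⟨E, h1, h2, h3⟩ := (tilesWord_v hv n (t + 2 * N)).exists_positions
    set u := v (n + (t + 2 * N)) with hu
    have hxu : ∀ m : ℤ, -(N : ℤ) ≤ m → m < N → x m = u.getD (t + (m + N).toNat) 0 := by
      intro m hm1 hm2
      have h4 := ht (m + N).toNat (by omega)
      rw [show -(N : ℤ) + ((m + N).toNat : ℤ) = m by omega] at h4
      have hlt : t + (m + N).toNat < u.length := by omega
      rw [h4, hV _ _ hlt, List.getD_eq_getElem _ _ hlt]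
      rfl
    refine ⟨{e | ∃ f ∈ E, (f : ℤ) = e + N + t}, ?_, ?_, ?_⟩
    · rintro e ⟨f, hf, hfe⟩ m hm1 hm2 hm3 hm4
      rw [hxu m hm3 hm4, wordFn, ← (h1 f hf).2 (m - e).toNat (by omega)]
      congr 1; omega
    · intro z hz1 hz2 hz0
      rw [hxu z hz1 hz2] at hz0
      obtain ⟨f, hf, hf1, hf2⟩ := h2 _ (by omega) hz0
      exact ⟨f - N - t, ⟨f, hf, by ring⟩, by omega, by omega⟩
    · rintro e ⟨f, hf, hfe⟩ e' ⟨f', hf', hfe'⟩ hlt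
      have := h3 f hf f' hf' (by omega)
      omega
  choose F hF1 hF2 hF3 using key
  have big : ∀ m : ℤ, ∀ᶠ N : ℕ in (Filter.hyperfilter ℕ : Filter ℕ), -(N : ℤ) ≤ m ∧ m < N := by
    intro m
    have : ∀ᶠ N : ℕ in Filter.atTop, -(N : ℤ) ≤ m ∧ m < N := by
      filter_upwards [Filter.eventually_gt_atTop m.natAbs] with N hN
      omega
    exact Nat.hyperfilter_le_atTop this
  refine ⟨{e | ∀ᶠ N in (Filter.hyperfilter ℕ : Filter ℕ), e ∈ F N}, ?_, ?_, ?_⟩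
  · intro e he m hm1 hm2
    obtain ⟨N, hN1, hN2⟩ := (Filter.Eventually.and he (big m)).exists
    exact hF1 N e hN1 m hm1 hm2 hN2.1 hN2.2
  · intro z hz
    have h4 : (⋃ e ∈ Set.Ioc (z - h) z, {N | e ∈ F N}) ∈ Filter.hyperfilter ℕ := by
      have := big z
      refine Filter.mem_of_superset this fun N hN => ?_
      obtain ⟨e, he, he1, he2⟩ := hF2 N z hN.1 hN.2 hz
      simp only [Set.mem_iUnion]
      exact ⟨e, ⟨by omega, he1⟩, he⟩
    rw [Ultrafilter.finite_biUnion_mem_iff (Set.finite_Ioc _ _)] at h4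
    obtain ⟨e, he, hmem⟩ := h4
    exact ⟨e, hmem, he.2, by have := he.1; omega⟩
  · intro e he e' he' hlt
    obtain ⟨N, hN1, hN2⟩ := (Filter.Eventually.and he he').exists
    exact hF3 N e hN1 e' hN2 hlt

/-! ### Long spacers as maximal blocks of `1`s -/

section Decomp

variable {w : List (Fin 2)} {x : ℤ → Fin 2} {p : ℤ → ℤ}

lemma ExpectedDecomp.eq_wordFn (hp : ExpectedDecomp w x p) (i k : ℤ) (h0 : 0 ≤ k)
    (hk : k < w.length) : x (p i + k) = wordFn w k := by
  have hlt : k.toNat < w.length := by omega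
  have := hp.2.2.1 i k.toNat hlt
  rw [Int.toNat_of_nonneg h0] at this
  rw [this, wordFn, List.getD_eq_getElem _ _ hlt]
  rfl

lemma ExpectedDecomp.maxRun (hp : ExpectedDecomp w x p) (hw : 0 < w.length)
    (w0 : wordFn w 0 = 0) (w1 : wordFn w (w.length - 1) = 0) {l : ℕ} {s : ℤ}
    (h : SpacerAt w p l s) : MaxRun x s l := by
  obtain ⟨i, rfl, h2⟩ := h
  refine ⟨?_, fun m hm1 hm2 => hp.2.2.2.1 i m hm1 (by omega), ?_⟩
  · rw [add_sub_assoc, hp.eq_wordFn i _ (by omega) (by omega), w1]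
  · rw [← h2, ← w0, ← hp.eq_wordFn (i + 1) 0 le_rfl (by omega), add_zero]

/-- As `w` begins and ends with `0`, a block of `1`s of length at least `w.length` cannot meet an
occurrence of `w`, whatever the decomposition. -/
lemma ExpectedDecomp.spacerAt (hp : ExpectedDecomp w x p) (hw : 0 < w.length)
    (w0 : wordFn w 0 = 0) (w1 : wordFn w (w.length - 1) = 0) {l : ℕ} {s : ℤ}
    (hl : w.length ≤ l) (h : MaxRun x s l) : SpacerAt w p l s := by
  classical
  obtain ⟨b, hb⟩ := hp.2.2.2.2.1 s
  obtain ⟨i, hi, hmax⟩ := Int.exists_greatest_of_bdd (P := fun i => p i ≤ s - 1)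
    ⟨b, fun z hz => by
      by_contra hcon
      have := hp.1 (not_le.mp hcon)
      omega⟩ (hp.2.2.2.2.2 (s - 1))
  have hi1 : s - 1 < p (i + 1) := by
    by_contra hcon
    have := hmax (i + 1) (by omega)
    omega
  have hin : s - 1 < p i + w.length := by
    by_contra hcon
    exact fin2_absurd h.1 (hp.2.2.2.1 i _ (by omega) hi1)
  have hend : x (p i + (w.length - 1)) = 0 := by
    rw [hp.eq_wordFn i _ (by omega) (by omega), w1]
  have hs : s = p i + w.length := by
    by_contra hcon
    exact fin2_absurd hend (h.2.1 _ (by omega) (by omega))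
  have hstart : x (p (i + 1)) = 0 := by
    rw [← w0, ← hp.eq_wordFn (i + 1) 0 le_rfl (by omega), add_zero]
  refine ⟨i, hs, le_antisymm ?_ ?_⟩
  · by_contra hcon
    exact fin2_absurd h.2.2 (hp.2.2.2.1 i _ (by omega) (by omega))
  · by_contra hcon
    exact fin2_absurd hstart (h.2.1 _ (by omega) (by omega))

end Decomp

/-! ### Conclusion -/

/-- **Lemma 4.3.**  Let `(X_V, T)` be a rank-one subshift with unbounded spacer
parameter and `L ≥ lh(v 1)`.  Let `x, x' ∈ X_V` contain no one-sided infinite run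
of `1`s, with decompositions into expected occurrences of `v 1` given by `p, p'`.
If for every `l ≥ L` every spacer of length `l` between expected occurrences of
`v 1` in `x` occurs at the same position as a spacer of the same length between
expected occurrences of `v 1` in `x'`, then `x = x'`. -/
theorem eq_of_long_spacers_aligned
    (q : ℕ → ℕ) (a : ℕ → ℕ → ℕ) (v : ℕ → List (Fin 2)) (hv : IsRankOneSeq q a v)
    (hubdd : UnboundedSpacer q a)
    (V : ℕ → Fin 2) (hV : IsLimitWord v V)
    (L : ℕ) (hL : (v 1).length ≤ L)
    (x x' : ℤ → Fin 2) (hx : x ∈ XV V) (hx' : x' ∈ XV V)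
    (hxrun : ¬ (∃ K : ℤ, ∀ k : ℤ, K ≤ k → x k = 1) ∧
             ¬ (∃ K : ℤ, ∀ k : ℤ, k ≤ K → x k = 1))
    (hx'run : ¬ (∃ K : ℤ, ∀ k : ℤ, K ≤ k → x' k = 1) ∧
              ¬ (∃ K : ℤ, ∀ k : ℤ, k ≤ K → x' k = 1))
    (p p' : ℤ → ℤ)
    (hp : ExpectedDecomp (v 1) x p) (hp' : ExpectedDecomp (v 1) x' p')
    (halign : ∀ l : ℕ, L ≤ l → ∀ s : ℤ,
      SpacerAt (v 1) p l s → SpacerAt (v 1) p' l s) :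
    x = x' := by
  classical
  have hw : ∀ n, 0 < (v n).length ∧ wordFn (v n) 0 = 0 ∧
      wordFn (v n) ((v n).length - 1) = 0 := by
    intro n
    obtain ⟨h1, ⟨A, hA⟩, ⟨B, hB⟩⟩ := v_prefix hv n
    refine ⟨by omega, by rw [hA]; simp [wordFn], by rw [hB]; simp [wordFn]⟩
  have hzr : ∀ y : ℤ → Fin 2, ¬ (∃ K : ℤ, ∀ k : ℤ, K ≤ k → y k = 1) →
      ∀ K : ℤ, ∃ k, K ≤ k ∧ y k = 0 := by
    intro y hy K
    by_contra! hcon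
    exact hy ⟨K, fun k hk => fin2_ne_zero (hcon k hk)⟩
  have hzl : ∀ K : ℤ, ∃ k, k ≤ K ∧ x k = 0 := by
    intro K
    by_contra! hcon
    exact hxrun.2 ⟨K, fun k hk => fin2_ne_zero (hcon k hk)⟩
  have hal : ∀ s l : ℤ, (L : ℤ) ≤ l → MaxRun x s l → MaxRun x' s l := by
    intro s l hl hr
    lift l to ℕ using by omega
    obtain ⟨a1, a2, a3⟩ := hw 1
    exact hp'.maxRun a1 a2 a3 (halign l (by omega) s (hp.spacerAt a1 a2 a3 (by omega) hr))
  obtain ⟨n, α₀, M, hLM, hα01, hα02, hα0⟩ := exists_long_run hv hubdd L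
  -- The first maximal block of `1`s of length `M` in `v n`.
  obtain ⟨α, ⟨hα1, hα⟩, hmin⟩ := Int.exists_least_of_bdd
    (P := fun β => 1 ≤ β ∧ MaxRun (wordFn (v n)) β M) ⟨1, fun z hz => hz.1⟩
    ⟨α₀, by omega, hα0⟩
  have hα2 : α + M < (v n).length := by
    have := hmin α₀ ⟨by omega, hα0⟩
    omega
  obtain ⟨h0, w0, w1⟩ := hw n
  obtain ⟨E', T'⟩ := exists_tiled hv hV hx' n
  obtain ⟨E, T⟩ := exists_tiled hv hV hx n
  -- A word `v k` with a block of `1`s too long to meet `v n`; it occurs in `x` near every zero.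
  obtain ⟨k, γ, l, hl, hγ1, hγ2, hγ⟩ := exists_long_run hv hubdd (max L (v n).length)
  obtain ⟨D, S⟩ := exists_tiled hv hV hx k
  funext m
  obtain ⟨z, hzm, hz0⟩ := hzl (m - (v k).length)
  obtain ⟨e, he, he1, he2⟩ := S.cover z hz0
  have hrun := S.maxRun he (by omega) (by omega) (by omega) hγ
  have hm1 := T.mem_of_long w1 (by omega) hrun
  have hm2 := T'.mem_of_long w1 (by omega) (hal _ _ (by omega) hrun)
  exact eq_right T T' (by omega) w0 w1 (by omega) (by omega : (L : ℤ) ≤ M) hα1 hα2 hα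
    (fun β h1 h2 => hmin β ⟨h1, h2⟩) hal (hzr x hxrun.1) (hzr x' hx'run.1) m
    ((m - (e + γ - (v n).length)).toNat + 1) _ hm1 hm2 (by omega) (by push_cast; omega)
end

section
/- Let (X_V, T) be a rank-one subshift with bounded spacer parameter. Then (X_V, T) is minimal: for every x ∈ X_V, the orbit {T^k x : k ∈ ℤ} is dense in X_V. -/
/-- The word `u` is a prefix of `w`, and from any position `t` of `w` at which `u` still fits
there is an occurrence of `u` in `w` starting between `t` and `t + |u| + B`. An occurrence at `s`
is encoded as `u` being a prefix of `w.drop s`. -/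
def Syndetic (u : List (Fin 2)) (B : ℕ) (w : List (Fin 2)) : Prop :=
  u <+: w ∧ ∀ t, t + u.length ≤ w.length →
    ∃ s, t ≤ s ∧ s ≤ t + (u.length + B) ∧ u <+: w.drop s

theorem syndetic_self (u : List (Fin 2)) (B : ℕ) : Syndetic u B u := by
  refine ⟨List.prefix_rfl, fun t ht => ⟨t, le_rfl, by omega, ?_⟩⟩
  obtain rfl : t = 0 := by omega
  simp

theorem syndetic_append {u : List (Fin 2)} {B b : ℕ} {w₁ w₂ : List (Fin 2)}
    (h₁ : Syndetic u B w₁) (h₂ : Syndetic u B w₂) (hb : b ≤ B) :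
    Syndetic u B (w₁ ++ (List.replicate b 1 ++ w₂)) := by
  refine ⟨h₁.1.trans (List.prefix_append _ _), fun t ht => ?_⟩
  -- Dropping `|w₁| + b + r` letters lands in `w₂` at position `r`.
  have hd : ∀ r, (w₁ ++ (List.replicate b 1 ++ w₂)).drop (w₁.length + b + r) = w₂.drop r := by
    intro r
    rw [← List.append_assoc]
    have : w₁.length + b + r = (w₁ ++ List.replicate b (1 : Fin 2)).length + r := by simp
    rw [this, List.drop_append, List.drop_eq_nil_of_le (by omega)]
    simp
  simp only [List.length_append, List.length_replicate] at ht
  by_cases c₁ : t + u.length ≤ w₁.length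
  · obtain ⟨s, hs, hs', hp⟩ := h₁.2 t c₁
    refine ⟨s, hs, hs', hp.trans ?_⟩
    rw [List.drop_append]
    exact List.prefix_append _ _
  · by_cases c₂ : t ≤ w₁.length + b
    · refine ⟨w₁.length + b, c₂, by omega, ?_⟩
      have := hd 0
      simp only [add_zero, List.drop_zero] at this
      rw [this]
      exact h₂.1
    · obtain ⟨s, hs, hs', hp⟩ := h₂.2 (t - (w₁.length + b)) (by omega)
      exact ⟨w₁.length + b + s, by omega, by omega, by rw [hd]; exact hp⟩

theorem syndetic_flatten {u : List (Fin 2)} {B : ℕ} {w : List (Fin 2)} (hw : Syndetic u B w)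
    (L : List (List (Fin 2))) (hL : ∀ l ∈ L, ∃ b ≤ B, l = List.replicate b 1 ++ w) :
    ∀ w₁, Syndetic u B w₁ → Syndetic u B (w₁ ++ L.flatten) := by
  induction L with
  | nil => intro w₁ h₁; simpa using h₁
  | cons l L ih =>
    intro w₁ h₁
    obtain ⟨b, hb, rfl⟩ := hL l (by simp)
    have := ih (fun l hl => hL l (by simp [hl])) _ (syndetic_append h₁ hw hb)
    simpa using this

theorem syndetic_seq {q : ℕ → ℕ} {a : ℕ → ℕ → ℕ} {v : ℕ → List (Fin 2)}
    (hv : IsRankOneSeq q a v) {B : ℕ} (hB : ∀ n i, 1 ≤ i → i < q n → a n i ≤ B)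
    (n m : ℕ) (h : n ≤ m) : Syndetic (v n) B (v m) := by
  induction m, h using Nat.le_induction with
  | base => exact syndetic_self _ _
  | succ m _ ih =>
    rw [hv.2.2 m]
    refine syndetic_flatten ih _ (fun l hl => ?_) _ ih
    rw [List.mem_ofFn] at hl
    obtain ⟨i, rfl⟩ := hl
    exact ⟨_, hB m (i.1 + 1) (by omega) (by omega), rfl⟩

theorem lt_length_seq {q : ℕ → ℕ} {a : ℕ → ℕ → ℕ} {v : ℕ → List (Fin 2)}
    (hv : IsRankOneSeq q a v) (n : ℕ) : n < (v n).length := by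
  induction n with
  | zero => simp [hv.2.1]
  | succ n ih =>
    obtain ⟨k, hk⟩ : ∃ k, q n - 1 = k + 1 := ⟨q n - 2, by have := hv.1 n; omega⟩
    rw [hv.2.2 n, hk, List.ofFn_succ]
    simp only [List.length_append, List.flatten_cons, List.length_replicate]
    omega

/-- Occurrences of `v n` in the infinite word `V` start at most `|v n| + B` apart. -/
theorem exists_occurrence {q : ℕ → ℕ} {a : ℕ → ℕ → ℕ} {v : ℕ → List (Fin 2)}
    (hv : IsRankOneSeq q a v) {B : ℕ} (hB : ∀ n i, 1 ≤ i → i < q n → a n i ≤ B)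
    {V : ℕ → Fin 2} (hV : IsLimitWord v V) (n t : ℕ) :
    ∃ s, t ≤ s ∧ s ≤ t + ((v n).length + B) ∧ ∀ k < (v n).length, V (s + k) = V k := by
  have hm := lt_length_seq hv (n + t + (v n).length)
  obtain ⟨s, hs, hs', hp⟩ :=
    (syndetic_seq hv hB n (n + t + (v n).length) (by omega)).2 t (by omega)
  refine ⟨s, hs, hs', fun k hk => ?_⟩
  have hl := hp.length_le
  rw [List.length_drop] at hl
  have e := hp.getElem hk
  rw [List.getElem_drop] at e
  rw [hV n k hk, hV (n + t + (v n).length) (s + k) (by omega)]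
  simpa using e.symm

/-- Let `(X_V, T)` be a rank-one subshift with bounded spacer parameter.  Then
`(X_V, T)` is minimal: for every `x ∈ X_V` the orbit `{T^k x : k ∈ ℤ}` is dense in
`X_V` (equivalently, every point of `X_V` lies in the closure of the orbit). -/
theorem rank_one_bounded_minimal
    (q : ℕ → ℕ) (a : ℕ → ℕ → ℕ) (v : ℕ → List (Fin 2)) (hv : IsRankOneSeq q a v)
    (hbdd : BoundedSpacer q a)
    (V : ℕ → Fin 2) (hV : IsLimitWord v V) :
    ∀ x ∈ XV V, ∀ z ∈ XV V,
      z ∈ closure {y : ℤ → Fin 2 | ∃ k : ℤ, ∀ j : ℤ, y j = x (j + k)} := by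
  intro x hx z hz
  obtain ⟨B, hB⟩ := hbdd
  rw [mem_closure_iff]
  intro O hO hzO
  obtain ⟨I, U, hU, hsub⟩ := isOpen_pi_iff.1 hO z hzO
  -- The basic neighbourhood only constrains coordinates in `[-N, N]`.
  set N := I.sup Int.natAbs with hN
  obtain ⟨t, ht⟩ := hz (-N) (2 * N + 1)
  -- The word `v n` is long enough to contain the window `V[t, t + 2N]`.
  set n := t + 2 * N + 1 with hn
  have hlen := lt_length_seq hv n
  obtain ⟨r, hr⟩ := hx 0 ((v n).length + B + (v n).length)
  obtain ⟨s, hs, hs', hocc⟩ := exists_occurrence hv hB hV n r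
  obtain ⟨d, rfl⟩ := Nat.exists_eq_add_of_le hs
  refine ⟨fun j => x (j + (d + t + N)), hsub fun j hj => ?_, ⟨_, fun j => rfl⟩⟩
  have hjN : j.natAbs ≤ N := Finset.le_sup (f := Int.natAbs) hj
  obtain ⟨k, hk⟩ : ∃ k : ℕ, j = -N + k := ⟨(j + N).toNat, by omega⟩
  have h1 := ht k (by omega)
  have h2 := hr (d + (t + k)) (by omega)
  have h3 := hocc (t + k) (by omega)
  have : x (j + (d + t + N)) = z j := by
    rw [hk, h1, ← h3, add_assoc r, ← h2]
    congr 1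
    push_cast
    ring
  change x (j + (d + t + N)) ∈ U j
  rw [this]
  exact (hU j hj).2
end

section
/- Let (X_V, T) be a rank-one subshift with unbounded spacer parameter and let K ∈ ℤ. Define the dual infinite rank-one word V*: −ℕ → {0,1} by V*(−k) = v_n(lh(v_n) − k − 1) for any n with lh(v_n) > k, and define z*_K ∈ {0,1}^ℤ by z*_K(k) = 1 for k > K and z*_K(k) = V*(k − K) for k ≤ K. Then z*_K ∈ X_V, and z*_K is the unique element z of X_V whose last occurrence of 0 is at coordinate K, i.e., the unique z ∈ X_V with z(K) = 0 and z(k) = 1 for all k > K. -/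
/-- `Vs` represents the dual infinite rank-one word `V*` (defined on `−ℕ`), via
`V*(−k) = Vs k`: every `v n` is an end segment of `V*`, i.e.
`V*(−k) = v n (lh(v n) − k − 1)` whenever `k < lh(v n)`. -/
def IsDualLimitWord (v : ℕ → List (Fin 2)) (Vs : ℕ → Fin 2) : Prop :=
  ∀ (n k : ℕ) (h : k < (v n).length),
    Vs k = (v n).get ⟨(v n).length - k - 1, by omega⟩

/-- The element `z*_K` of `{0,1}^ℤ`: all `1`s after coordinate `K`, and a copy of
the dual infinite rank-one word `V*` ending at coordinate `K` (here `Vs k`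
represents `V*(−k)`). -/
def zStarWord (Vs : ℕ → Fin 2) (K : ℤ) : ℤ → Fin 2 :=
  fun k => if K < k then 1 else Vs (K - k).toNat

/-- Every `0` of `w` lies inside an occurrence of `u` in `w`. -/
def Covers (u w : List (Fin 2)) : Prop :=
  ∀ P : ℕ, w[P]? = some 0 →
    ∃ A C, w = A ++ u ++ C ∧ A.length ≤ P ∧ P < A.length + u.length

theorem Covers.self (u : List (Fin 2)) : Covers u u := by
  intro P hP
  obtain ⟨h, -⟩ := List.getElem?_eq_some_iff.mp hP
  exact ⟨[], [], by simp, by simp, by simpa using h⟩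

theorem Covers.append {u w w' : List (Fin 2)} (h : Covers u w) (h' : Covers u w') :
    Covers u (w ++ w') := by
  intro P hP
  by_cases hlt : P < w.length
  · rw [List.getElem?_append_left hlt] at hP
    obtain ⟨A, C, hw, h1, h2⟩ := h P hP
    exact ⟨A, C ++ w', by simp [hw], h1, h2⟩
  · rw [List.getElem?_append_right (by omega)] at hP
    obtain ⟨A, C, hw, h1, h2⟩ := h' _ hP
    exact ⟨w ++ A, C, by simp [hw], by simp; omega, by simp; omega⟩

theorem Covers.replicate (u : List (Fin 2)) (b : ℕ) : Covers u (List.replicate b 1) := by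
  intro P hP
  simp [List.getElem?_replicate] at hP

theorem Covers.flatten {u : List (Fin 2)} {l : List (List (Fin 2))} (h : ∀ w ∈ l, Covers u w) :
    Covers u l.flatten := by
  induction l with
  | nil => intro P hP; simp at hP
  | cons w l ih =>
    rw [List.flatten_cons]
    exact (h w (by simp)).append (ih fun w' hw' => h w' (by simp [hw']))

theorem suffix_append_flatten {u : List (Fin 2)} (l : List (List (Fin 2)))
    (h : ∀ w ∈ l, u <:+ w) : u <:+ u ++ l.flatten := by
  rcases List.eq_nil_or_concat l with rfl | ⟨l', w, rfl⟩
  · simp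
  · obtain ⟨s, hs⟩ := h w (by simp)
    exact ⟨u ++ l'.flatten ++ s, by simp [← hs]⟩

section RankOne

variable {q : ℕ → ℕ} {a : ℕ → ℕ → ℕ} {v : ℕ → List (Fin 2)}

theorem covers_word (hv : IsRankOneSeq q a v) (n m : ℕ) (hnm : n ≤ m) : Covers (v n) (v m) := by
  induction m, hnm using Nat.le_induction with
  | base => exact Covers.self _
  | succ m _ ih =>
    rw [hv.2.2 m]
    refine ih.append (Covers.flatten fun w hw => ?_)
    obtain ⟨i, rfl⟩ := (List.mem_ofFn' _ _).mp hw
    exact (Covers.replicate _ _).append ih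

theorem suffix_word (hv : IsRankOneSeq q a v) (n : ℕ) : v n <:+ v (n + 1) := by
  rw [hv.2.2 n]
  refine suffix_append_flatten _ fun w hw => ?_
  obtain ⟨i, rfl⟩ := (List.mem_ofFn' _ _).mp hw
  exact List.suffix_append _ _

theorem exists_spacer_block (hv : IsRankOneSeq q a v) (n i : ℕ) (h1 : 1 ≤ i) (hi : i < q n) :
    ∃ A C, v (n + 1) = A ++ v n ++ List.replicate (a n i) 1 ++ C := by
  have hrec := hv.2.2 n
  set l := List.ofFn fun j : Fin (q n - 1) => List.replicate (a n (j.1 + 1)) (1 : Fin 2) ++ v n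
    with hl
  have hlen : i - 1 < l.length := by simp [hl]; omega
  have hget : l[i - 1] = List.replicate (a n i) 1 ++ v n := by
    simp [hl, Nat.sub_add_cancel h1]
  have hsplit : l = l.take (i - 1) ++ l[i - 1] :: l.drop (i - 1 + 1) := by simp
  obtain ⟨A, hA⟩ : v n <:+ v n ++ (l.take (i - 1)).flatten := by
    refine suffix_append_flatten _ fun w hw => ?_
    obtain ⟨j, rfl⟩ := (List.mem_ofFn' _ _).mp (List.mem_of_mem_take hw)
    exact List.suffix_append _ _
  refine ⟨A, v n ++ (l.drop (i - 1 + 1)).flatten, ?_⟩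
  rw [hA, hrec]
  conv_lhs => rw [hsplit, hget]
  simp

theorem lt_length_word (hv : IsRankOneSeq q a v) (n : ℕ) : n < (v n).length := by
  induction n with
  | zero => simp [hv.2.1]
  | succ n ih =>
    have hq := hv.1 n
    obtain ⟨k, hk⟩ : ∃ k, q n - 1 = k + 1 := ⟨q n - 2, by omega⟩
    have hrec := hv.2.2 n
    rw [hk, List.ofFn_succ, List.flatten_cons] at hrec
    have hlen := congrArg List.length hrec
    simp only [List.length_append] at hlen
    omega

/-- The last letter of `v n` is `0`. -/
theorem getElem?_last_word (hv : IsRankOneSeq q a v) (n : ℕ) :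
    (v n)[(v n).length - 1]? = some 0 := by
  induction n with
  | zero => simp [hv.2.1]
  | succ n ih =>
    have := lt_length_word hv n
    obtain ⟨s, hs⟩ := suffix_word hv n
    rw [← hs, List.getElem?_append_right (by simp; omega), ← ih]
    congr 1
    simp; omega

/-- Unboundedly large spacers occur at arbitrarily high levels, since each level has only finitely
many. -/
theorem exists_large_spacer (hubdd : UnboundedSpacer q a) (N B : ℕ) :
    ∃ n i, N ≤ n ∧ 1 ≤ i ∧ i < q n ∧ B < a n i := by
  obtain ⟨n, i, h1, hi, hB⟩ :=
    hubdd (B + ∑ m ∈ Finset.range N, ∑ j ∈ Finset.range (q m), a m j)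
  refine ⟨n, i, ?_, h1, hi, by omega⟩
  by_contra hn
  have e1 : a n i ≤ ∑ j ∈ Finset.range (q n), a n j :=
    Finset.single_le_sum (f := fun j => a n j) (fun _ _ => Nat.zero_le _)
      (Finset.mem_range.mpr hi)
  have e2 : ∑ j ∈ Finset.range (q n), a n j ≤
      ∑ m ∈ Finset.range N, ∑ j ∈ Finset.range (q m), a m j :=
    Finset.single_le_sum (f := fun m => ∑ j ∈ Finset.range (q m), a m j)
      (fun _ _ => Nat.zero_le _) (Finset.mem_range.mpr (by omega))
  omega

variable {V Vs : ℕ → Fin 2}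

theorem limitWord_eq (hV : IsLimitWord v V) {n k : ℕ} {c : Fin 2} (h : (v n)[k]? = some c) :
    V k = c := by
  obtain ⟨hk, rfl⟩ := List.getElem?_eq_some_iff.mp h
  exact hV n k hk

theorem getElem?_dualLimitWord (hVs : IsDualLimitWord v Vs) {n k : ℕ} (h : k < (v n).length) :
    (v n)[(v n).length - 1 - k]? = some (Vs k) := by
  rw [hVs n k h, List.getElem?_eq_some_iff]
  refine ⟨by omega, ?_⟩
  simp only [List.get_eq_getElem]
  congr 1
  omega

theorem zStarWord_mem (hv : IsRankOneSeq q a v) (hubdd : UnboundedSpacer q a)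
    (hV : IsLimitWord v V) (hVs : IsDualLimitWord v Vs) (K : ℤ) : zStarWord Vs K ∈ XV V := by
  intro i m
  obtain ⟨n, j, hn, h1, hj, hB⟩ :=
    exists_large_spacer hubdd (K - i).toNat (i + m - K).toNat
  have hlen := lt_length_word hv n
  obtain ⟨A, C, hw⟩ := exists_spacer_block hv n j h1 hj
  -- The occurrence of the window puts coordinate `K` on the last letter of this copy of `v n`.
  refine ⟨((A.length + (v n).length : ℤ) - 1 - (K - i)).toNat, fun k hk => ?_⟩
  symm
  apply limitWord_eq hV (n := n + 1)
  rw [hw, List.append_assoc, List.append_assoc, List.getElem?_append_right (by omega)]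
  unfold zStarWord
  split_ifs with hK
  · rw [List.getElem?_append_right (by omega), List.getElem?_append_left (by simp; omega),
      List.getElem?_replicate, if_pos (by omega)]
  · rw [List.getElem?_append_left (by omega),
      ← getElem?_dualLimitWord hVs (n := n) (k := (K - (i + k)).toNat) (by omega)]
    congr 1
    omega

theorem eq_zStarWord (hv : IsRankOneSeq q a v) (hV : IsLimitWord v V)
    (hVs : IsDualLimitWord v Vs) {K : ℤ} {z : ℤ → Fin 2} (hz : z ∈ XV V) (h0 : z K = 0)
    (hK : ∀ k : ℤ, K < k → z k = 1) : z = zStarWord Vs K := by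
  funext k
  unfold zStarWord
  split_ifs with hk
  · exact hK k hk
  have hlen := lt_length_word hv (K - k).toNat
  set n := (K - k).toNat with hn
  set L := (v n).length with hL
  obtain ⟨t, ht⟩ := hz (K - L + 1) (2 * L)
  have hzero : V (t + (L - 1)) = 0 := by
    rw [← ht (L - 1) (by omega), ← h0]
    congr 1
    omega
  have hone : ∀ j, 1 ≤ j → j ≤ L → V (t + (L - 1) + j) = 1 := by
    intro j h1 hj
    rw [add_assoc, ← ht (L - 1 + j) (by omega)]
    exact hK _ (by omega)
  obtain ⟨A, C, hw, hA1, hA2⟩ := covers_word hv n (n + (t + L)) (by omega) (t + (L - 1)) (by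
    have hlt := lt_length_word hv (n + (t + L))
    rw [List.getElem?_eq_getElem (by omega), ← hzero, hV (n + (t + L)) _ (by omega)]
    rfl)
  have hcopy : ∀ (j : ℕ) (c : Fin 2), (v n)[j]? = some c → V (A.length + j) = c := by
    intro j c hj
    obtain ⟨hj', -⟩ := List.getElem?_eq_some_iff.mp hj
    apply limitWord_eq hV (n := n + (t + L))
    rw [hw, List.append_assoc, List.getElem?_append_right (by omega),
      List.getElem?_append_left (by omega), ← hj]
    congr 1
    omega
  -- Otherwise the final `0` of this copy of `v n` would lie in the run of `1`s.
  have hend : t = A.length := by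
    by_contra hne
    have e0 := hcopy _ _ (getElem?_last_word hv n)
    have e1 := hone (A.length + (L - 1) - (t + (L - 1))) (by omega) (by omega)
    rw [show t + (L - 1) + (A.length + (L - 1) - (t + (L - 1))) = A.length + (L - 1) by omega,
      e0] at e1
    exact absurd e1 (by decide)
  rw [← hcopy _ _ (getElem?_dualLimitWord hVs (n := n) (k := n) hlen), ← hend,
    ← ht (L - 1 - n) (by omega)]
  congr 1
  omega

end RankOne

/-- Let `(X_V, T)` be a rank-one subshift with unbounded spacer parameter and
`K ∈ ℤ`.  Then `z*_K ∈ X_V`, and `z*_K` is the unique element `z` of `X_V` whose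
last occurrence of `0` is at coordinate `K`, i.e. the unique `z ∈ X_V` with
`z(K) = 0` and `z(k) = 1` for all `k > K`. -/
theorem zStarWord_mem_and_unique
    (q : ℕ → ℕ) (a : ℕ → ℕ → ℕ) (v : ℕ → List (Fin 2)) (hv : IsRankOneSeq q a v)
    (hubdd : UnboundedSpacer q a)
    (V : ℕ → Fin 2) (hV : IsLimitWord v V)
    (Vs : ℕ → Fin 2) (hVs : IsDualLimitWord v Vs) (K : ℤ) :
    zStarWord Vs K ∈ XV V ∧ zStarWord Vs K K = 0 ∧
      (∀ k : ℤ, K < k → zStarWord Vs K k = 1) ∧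
      ∀ z ∈ XV V, z K = 0 → (∀ k : ℤ, K < k → z k = 1) → z = zStarWord Vs K := by
  refine ⟨zStarWord_mem hv hubdd hV hVs K, ?_, fun k hk => if_pos hk,
    fun z hz h0 hK => eq_zStarWord hv hV hVs hz h0 hK⟩
  have h := getElem?_dualLimitWord hVs (n := 0) (k := 0) (lt_length_word hv 0)
  rw [Nat.sub_zero, getElem?_last_word hv 0] at h
  simpa [zStarWord] using (Option.some.inj h).symm
end
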